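/- Let F : E^n_(p) → Ω be a proper holomorphic map of multiplicity m > 1 onto a domain Ω ⊆ ℂ^n, admitting a C¹ extension to the closure of E^n_(p). Let Z̃_F = { x ∈ ∂E^n_(p) : det 𝕁_F(x) = 0 } and π̃ = { z ∈ ∂E^n_(p) : z_{n−k+1}···z_n = 0 }. Then the (2n−1)-dimensional Hausdorff measure of F(Z̃_F ∪ π̃) is zero, and consequently ∂Ω \ F(Z̃_F ∪ π̃) is nonempty. -/

import Mathlib

/-!
At a boundary point of the pseudoellipsoid the real differential of `G` is a limit of complex linear
maps, hence complex linear (`fderiv_I_smul_of_mem_closure`). Where its determinant vanishes its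
kernel has real dimension at least `2` and therefore contains a nonzero vector tangent to the
boundary (`exists_ne_zero_mem_ker_of_det_eq_zero`). The boundary lies in the level set `ρ = 1` of the
defining function, whose differential does not vanish there, so the restriction of `G` to this
hypersurface of dimension `2n - 1` has a non-injective differential on the critical set, and a
Sard lemma for Hausdorff measure (`hausdorffMeasure_image_eq_zero_of_not_injective`,
`hausdorffMeasure_image_hypersurface_eq_zero`) shows that the image is `μH[2n - 1]`-null. The points
with a vanishing coordinate lie in finitely many real subspaces of dimension `2n - 2`, whose images
under the locally Lipschitz map `G` are null as well.

For the second claim, `Ω` is contained in the compact set `G(closure E)`, so it is a nonempty bounded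
open set, and the frontier of such a set has positive `μH[2n - 1]`-measure
(`hausdorffMeasure_frontier_ne_zero`): it cannot be contained in a null set.
-/

open Metric Set Filter Topology MeasureTheory

noncomputable section

/-- `ℂⁿ` as a complex Euclidean space. -/
abbrev Cn (n : ℕ) := EuclideanSpace ℂ (Fin n)

/-- Points of the open unit ball `Bⁿ ⊆ ℂⁿ`. -/
abbrev BallPt (n : ℕ) := ↥(Metric.ball (0 : Cn n) 1)

/-- The pseudoellipsoid `E^n_(p)`. -/
def pseudoEllipsoid (n k : ℕ) (hk : k ≤ n) (p : Fin k → ℕ) : Set (Cn n) :=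
  { z | (∑ j : Fin (n - k), ‖z (Fin.castLE (Nat.sub_le n k) j)‖ ^ 2)
      + ∑ i : Fin k, ‖z ⟨n - k + (i : ℕ), by have := i.isLt; omega⟩‖ ^ (2 * p i) < 1 }

/-- The map `φ^(p)`. -/
def phiMap (n k : ℕ) (hk : k ≤ n) (p : Fin k → ℕ) (z : Cn n) : Cn n :=
  (EuclideanSpace.equiv (Fin n) ℂ).symm fun j =>
    if _h : (j : ℕ) < n - k then z j
    else z j ^ (p ⟨(j : ℕ) - (n - k), by have := j.isLt; omega⟩)

/-- `f : D → Ω` is proper: preimages of compact subsets of `Ω` are compact. -/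
def ProperOn (n : ℕ) (f : Cn n → Cn n) (D Ω : Set (Cn n)) : Prop :=
  ∀ K ⊆ Ω, IsCompact K → IsCompact {z ∈ D | f z ∈ K}

/-- Determinant of the complex Jacobian of `f` at `z`. -/
def cDet (n : ℕ) (f : Cn n → Cn n) (z : Cn n) : ℂ :=
  LinearMap.det ((fderiv ℂ f z : Cn n →L[ℂ] Cn n) : Cn n →ₗ[ℂ] Cn n)

/-- The singular locus `Z_F` of `f` in `D`. -/
def singularSet (n : ℕ) (f : Cn n → Cn n) (D : Set (Cn n)) : Set (Cn n) :=
  {z ∈ D | cDet n f z = 0}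

/-- `f : D → Ω` has multiplicity `m`: each fiber over a point outside the
critical value set `f(Z_f)` has cardinality `m`. -/
def HasMultiplicity (n : ℕ) (f : Cn n → Cn n) (D Ω : Set (Cn n)) (m : ℕ) : Prop :=
  ∀ w ∈ Ω \ (f '' singularSet n f D), (D ∩ f ⁻¹' {w}).ncard = m

/-- `f` extends to a `C¹` map on (a neighbourhood of) the closure of `D`. -/
def HasC1Extension (n : ℕ) (f : Cn n → Cn n) (D : Set (Cn n)) : Prop :=
  ∃ (U : Set (Cn n)) (g : Cn n → Cn n), IsOpen U ∧ closure D ⊆ U ∧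
    ContDiffOn ℝ 1 g U ∧ EqOn g f D

/-- Determinant of the real Jacobian `𝕁_f(x)` (ℂⁿ viewed as ℝ²ⁿ). -/
def rDet (n : ℕ) (f : Cn n → Cn n) (x : Cn n) : ℝ :=
  LinearMap.det ((fderiv ℝ f x : Cn n →L[ℝ] Cn n) : Cn n →ₗ[ℝ] Cn n)

/-- Rank of the real Jacobian `𝕁_f(x)`. -/
def rRank (n : ℕ) (f : Cn n → Cn n) (x : Cn n) : ℕ :=
  Module.finrank ℝ (LinearMap.range ((fderiv ℝ f x : Cn n →L[ℝ] Cn n) : Cn n →ₗ[ℝ] Cn n))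

/-- Rank of the complex Jacobian of `f` at `x`. -/
def cRank (n : ℕ) (f : Cn n → Cn n) (x : Cn n) : ℕ :=
  Module.finrank ℂ (LinearMap.range ((fderiv ℂ f x : Cn n →L[ℂ] Cn n) : Cn n →ₗ[ℂ] Cn n))

/-- A permutation of the unit ball which is holomorphic. -/
def IsHoloPerm (n : ℕ) (f : Equiv.Perm (BallPt n)) : Prop :=
  ∃ g : Cn n → Cn n, DifferentiableOn ℂ g (Metric.ball 0 1) ∧
    ∀ z : BallPt n, g (z : Cn n) = (f z : Cn n)

/-- A holomorphic automorphism of the unit ball. -/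
def IsBallAut (n : ℕ) (f : Equiv.Perm (BallPt n)) : Prop :=
  IsHoloPerm n f ∧ IsHoloPerm n f.symm

/-- A finite subgroup of `Aut(Bⁿ)`. -/
def IsFiniteBallAutSubgroup (n : ℕ) (Γ : Subgroup (Equiv.Perm (BallPt n))) : Prop :=
  (Γ : Set (Equiv.Perm (BallPt n))).Finite ∧ ∀ f ∈ Γ, IsHoloPerm n f

/-- A geodesic hyperplane of `Bⁿ`: the image of `{z_n = 0}` by an automorphism. -/
def IsGeodesicHyperplane (n : ℕ) (hn : 0 < n) (H : Set (BallPt n)) : Prop :=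
  ∃ g : Equiv.Perm (BallPt n), IsBallAut n g ∧
    H = g '' {z : BallPt n | (z : Cn n) ⟨n - 1, by omega⟩ = 0}

/-- A reflection of `Bⁿ`: a finite-order automorphism whose fixed point set is a
geodesic hyperplane. -/
def IsReflection (n : ℕ) (hn : 0 < n) (f : Equiv.Perm (BallPt n)) : Prop :=
  IsBallAut n f ∧ IsOfFinOrder f ∧ IsGeodesicHyperplane n hn {z : BallPt n | f z = z}

/-- `Γ_ref`: the subgroup generated by the reflections contained in `Γ`. -/
def reflSubgroup (n : ℕ) (hn : 0 < n) (Γ : Subgroup (Equiv.Perm (BallPt n))) :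
    Subgroup (Equiv.Perm (BallPt n)) :=
  Subgroup.closure {f | f ∈ Γ ∧ IsReflection n hn f}

/-- A ball permutation is represented on the ball by the (unitary) linear isometry `U`. -/
def RepresentsOnBall (n : ℕ) (f : Equiv.Perm (BallPt n)) (U : Cn n ≃ₗᵢ[ℂ] Cn n) : Prop :=
  ∀ z : BallPt n, (f z : Cn n) = U (z : Cn n)

/-- Evaluation of a polynomial in `n` variables at a point of `ℂⁿ`. -/
def evalAt (n : ℕ) (Q : MvPolynomial (Fin n) ℂ) (z : Cn n) : ℂ :=
  MvPolynomial.eval (fun i => z i) Q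

/-- `Q` is invariant under the reflection subgroup `Γ_o,ref = h Γ_ref h⁻¹ ⊆ U(n)`. -/
def IsReflInvariant (n : ℕ) (hn : 0 < n) (Γ : Subgroup (Equiv.Perm (BallPt n)))
    (hmap : Equiv.Perm (BallPt n)) (Q : MvPolynomial (Fin n) ℂ) : Prop :=
  ∀ f ∈ reflSubgroup n hn Γ, ∀ U : Cn n ≃ₗᵢ[ℂ] Cn n,
    RepresentsOnBall n (hmap * f * hmap⁻¹) U →
      ∀ z : Cn n, evalAt n Q (U z) = evalAt n Q z

/-- The data entering the construction of the Chevalley map `P_Γ` associated with a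
finite subgroup `Γ ⊆ Aut(Bⁿ)`: an automorphism `h` carrying a common fixed point `x₀`
of `Γ` to `0` (so that `hΓh⁻¹ ⊆ U(n)`), and a basis `P₁,…,Pₙ` of homogeneous
polynomials for the algebra of `Γ_o,ref`-invariant polynomials. -/
structure ChevalleyData (n : ℕ) (hn : 0 < n) (Γ : Subgroup (Equiv.Perm (BallPt n))) where
  hmap : Equiv.Perm (BallPt n)
  hmap_aut : IsBallAut n hmap
  x0 : BallPt n
  x0_fixed : ∀ f ∈ Γ, f x0 = x0
  hmap_x0 : (hmap x0 : Cn n) = 0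
  conj_unitary : ∀ f ∈ Γ, ∃ U : Cn n ≃ₗᵢ[ℂ] Cn n, RepresentsOnBall n (hmap * f * hmap⁻¹) U
  P : Fin n → MvPolynomial (Fin n) ℂ
  deg : Fin n → ℕ
  homog : ∀ i, (P i).IsHomogeneous (deg i)
  invariant : ∀ i, IsReflInvariant n hn Γ hmap (P i)
  generates : ∀ Q : MvPolynomial (Fin n) ℂ, IsReflInvariant n hn Γ hmap Q →
    ∃ R : MvPolynomial (Fin n) ℂ, Q = MvPolynomial.aeval P R

/-- The proper holomorphic map `P_Γ = (P₁,…,Pₙ) ∘ h : Bⁿ → ℂⁿ` (extended by `0`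
outside the ball). -/
def ChevalleyData.map {n : ℕ} {hn : 0 < n} {Γ : Subgroup (Equiv.Perm (BallPt n))}
    (C : ChevalleyData n hn Γ) : Cn n → Cn n := fun z =>
  letI : Decidable (z ∈ Metric.ball (0 : Cn n) 1) := Classical.dec _
  if hz : z ∈ Metric.ball (0 : Cn n) 1 then
    (EuclideanSpace.equiv (Fin n) ℂ).symm fun i =>
      evalAt n (C.P i) ((C.hmap ⟨z, hz⟩ : BallPt n) : Cn n)
  else 0

/-- The domain `B^n_Γ = P_Γ(Bⁿ)`. -/
def ChevalleyData.image {n : ℕ} {hn : 0 < n} {Γ : Subgroup (Equiv.Perm (BallPt n))}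
    (C : ChevalleyData n hn Γ) : Set (Cn n) :=
  C.map '' Metric.ball 0 1

/-- A biholomorphism from `A` onto `B`. -/
def IsBiholoOn (n : ℕ) (f : Cn n → Cn n) (A B : Set (Cn n)) : Prop :=
  DifferentiableOn ℂ f A ∧ BijOn f A B ∧
    ∃ g : Cn n → Cn n, DifferentiableOn ℂ g B ∧ BijOn g B A ∧ InvOn g f A B

/-- A complex-analytic subvariety `S` of (an open set) `D`: locally the common zero
set of finitely many holomorphic functions. -/
def IsAnalyticSubvariety {E : Type*} [NormedAddCommGroup E] [NormedSpace ℂ E]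
    (D S : Set E) : Prop :=
  S ⊆ D ∧ ∀ x ∈ D, ∃ U : Set E, IsOpen U ∧ x ∈ U ∧ U ⊆ D ∧
    ∃ (N : ℕ) (f : Fin N → E → ℂ), (∀ i, DifferentiableOn ℂ (f i) U) ∧
      S ∩ U = {z ∈ U | ∀ i, f i z = 0}

/-- Two points `y, y'` of `Bⁿ` are `F`-related: they lie in a common set
`φ^(p)(F⁻¹(w))`, `w ∈ Ω`. -/
def FRelated (n k : ℕ) (hk : k ≤ n) (p : Fin k → ℕ) (F : Cn n → Cn n)
    (E Ω : Set (Cn n)) (y y' : Cn n) : Prop :=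
  ∃ w ∈ Ω, y ∈ phiMap n k hk p '' (E ∩ F ⁻¹' {w}) ∧
    y' ∈ phiMap n k hk p '' (E ∩ F ⁻¹' {w})

/-- The correspondence with graph `V ⊆ D × D'` splits at `z₀ ∈ D`. -/
def SplitsAt (n : ℕ) (D D' : Set (Cn n)) (V : Set (Cn n × Cn n)) (z0 : Cn n) : Prop :=
  ∃ U : Set (Cn n), IsOpen U ∧ z0 ∈ U ∧ ∃ (q : ℕ) (g : Fin q → Cn n → Cn n),
    (∀ i, DifferentiableOn ℂ (g i) (U ∩ D) ∧ MapsTo (g i) (U ∩ D) D') ∧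
    ∀ z ∈ U ∩ D, ∀ w ∈ D', ((z, w) ∈ V ↔ ∃ i, g i z = w)

/-- `D` is a bounded domain with smooth boundary: near each boundary point there is a
smooth local defining function with nonvanishing differential. -/
def HasSmoothBoundary (n : ℕ) (D : Set (Cn n)) : Prop :=
  ∀ x ∈ frontier D, ∃ (V : Set (Cn n)) (ρ : Cn n → ℝ), IsOpen V ∧ x ∈ V ∧
    ContDiff ℝ (⊤ : ℕ∞) ρ ∧ (∀ y ∈ V, fderiv ℝ ρ y ≠ 0) ∧
    D ∩ V = {y ∈ V | ρ y < 0} ∧ frontier D ∩ V = {y ∈ V | ρ y = 0}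

end

noncomputable instance (n : ℕ) : MeasurableSpace (Cn n) := borel _
instance (n : ℕ) : BorelSpace (Cn n) := ⟨rfl⟩

open Module (finrank)
open scoped NNReal ENNReal

/-! ### A Sard lemma for Hausdorff measure -/

section Sard
variable {E X : Type*} [NormedAddCommGroup E] [NormedSpace ℝ E] [FiniteDimensional ℝ E]
  [MeasurableSpace E] [BorelSpace E]
  [NormedAddCommGroup X] [NormedSpace ℝ X] [MeasurableSpace X] [BorelSpace X]

/-- A map that is close to a non-injective linear map `A` shrinks Hausdorff measure in the dimension
of the source by an arbitrarily small factor. If `A v = 0` and `T` contracts the direction `v` by the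
factor `t`, then `A ∘ T = A`, so a map `f` that is `O(t)`-close to `A` factors as a
`(‖A‖ + 1)`-Lipschitz map after `T`, while `T` multiplies the measure by `det T = t`. -/
theorem hausdorffMeasure_image_le_of_approximates_degenerate (A : E →L[ℝ] X)
    (hA : ∃ v, v ≠ 0 ∧ A v = 0) (ε : ℝ≥0) (hε : 0 < ε) :
    ∃ δ : ℝ≥0, δ ≠ 0 ∧ ∀ (f : E → X) (s : Set E), ApproximatesLinearOn f A s δ →
      μH[finrank ℝ E] (f '' s) ≤ ε * μH[finrank ℝ E] s := by
  obtain ⟨v, hv, hAv⟩ := hA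
  obtain ⟨φ, hφ⟩ := SeparatingDual.exists_eq_one (R := ℝ) hv
  set d := finrank ℝ E with hd
  -- `K` bounds the Lipschitz constant after rescaling; `t` is chosen so that `K ^ d * t ≤ ε`.
  set K : ℝ≥0 := ‖A‖₊ + 1 with hK
  have hKpos : 0 < K := by positivity
  set t : ℝ≥0 := min 1 (ε / K ^ d) with ht
  have htpos : 0 < t := lt_min one_pos (by positivity)
  have ht1 : t ≤ 1 := min_le_left _ _
  have htε : K ^ d * t ≤ ε := by
    calc K ^ d * t ≤ K ^ d * (ε / K ^ d) := by gcongr; exact min_le_right _ _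
      _ = ε := by field_simp
  set C : ℝ≥0 := 1 + ‖φ‖₊ * ‖v‖₊ with hC
  have hCpos : 0 < C := by positivity
  set T : E →ₗ[ℝ] E := LinearMap.transvection (((t : ℝ) - 1) • (φ : E →ₗ[ℝ] ℝ)) v with hT
  have hTx (x : E) : T x = x + (((t : ℝ) - 1) * φ x) • v := by
    simp [hT, LinearMap.transvection.apply]
  have hφT (x : E) : φ (T x) = t * φ x := by
    rw [hTx]; simp [hφ]; ring
  have hAT (x : E) : A (T x) = A x := by rw [hTx]; simp [hAv]
  have hdet : LinearMap.det T = (t : ℝ) := by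
    rw [hT, LinearMap.transvection.det]; simp [hφ]
  -- `T⁻¹` has norm at most `C / t`.
  have hlow (x : E) : (t / C : ℝ) * ‖x‖ ≤ ‖T x‖ := by
    have h1 : x = T x + ((1 - (t : ℝ)) * φ x) • v := by
      rw [hTx, add_assoc, ← add_smul]; ring_nf; simp
    have h2 : (t : ℝ) * |φ x| ≤ ‖φ‖ * ‖T x‖ := by
      have := φ.le_opNorm (T x)
      rwa [hφT, Real.norm_eq_abs, abs_mul, NNReal.abs_eq] at this
    have h3 : ‖x‖ ≤ ‖T x‖ + (1 - t) * |φ x| * ‖v‖ := by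
      calc ‖x‖ = ‖T x + ((1 - (t : ℝ)) * φ x) • v‖ := by rw [← h1]
        _ ≤ _ := by
          refine (norm_add_le _ _).trans_eq ?_
          rw [norm_smul, Real.norm_eq_abs, abs_mul, abs_of_nonneg (a := 1 - (t : ℝ))]
          have : (t : ℝ) ≤ 1 := by exact_mod_cast ht1
          linarith
    have ht1' : (t : ℝ) ≤ 1 := by exact_mod_cast ht1
    have ht0' : (0 : ℝ) < t := by exact_mod_cast htpos
    have hC' : (C : ℝ) = 1 + ‖φ‖ * ‖v‖ := by simp [hC]
    have hC0 : (0 : ℝ) < C := by exact_mod_cast hCpos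
    rw [div_mul_eq_mul_div, div_le_iff₀ hC0, hC']
    calc (t : ℝ) * ‖x‖ ≤ t * (‖T x‖ + (1 - t) * |φ x| * ‖v‖) := by gcongr
      _ = t * ‖T x‖ + (1 - t) * (t * |φ x|) * ‖v‖ := by ring
      _ ≤ 1 * ‖T x‖ + 1 * (‖φ‖ * ‖T x‖) * ‖v‖ := by
          gcongr
          linarith
      _ = _ := by ring
  refine ⟨t / C, by positivity, fun f s hf => ?_⟩
  have hinj : Function.Injective T := by
    rw [← LinearMap.ker_eq_bot, LinearMap.ker_eq_bot']
    intro x hx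
    have := hlow x
    rw [hx, norm_zero] at this
    have h0 : (0 : ℝ) < t / C := by
      have : 0 < t / C := by positivity
      exact_mod_cast this
    exact norm_le_zero_iff.1 (by nlinarith [norm_nonneg x])
  have hlip : LipschitzOnWith K (f ∘ Function.invFun T) (T '' s) := by
    refine LipschitzOnWith.of_dist_le_mul ?_
    rintro _ ⟨x, hx, rfl⟩ _ ⟨y, hy, rfl⟩
    simp only [Function.comp, Function.leftInverse_invFun hinj _, dist_eq_norm]
    have h1 := hf x hx y hy
    have h2 := hlow (x - y)
    have h3 := A.le_opNorm (T (x - y))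
    rw [hAT] at h3
    rw [← map_sub]
    calc ‖f x - f y‖ = ‖(f x - f y - A (x - y)) + A (x - y)‖ := by simp
      _ ≤ ‖f x - f y - A (x - y)‖ + ‖A (x - y)‖ := norm_add_le _ _
      _ ≤ ‖T (x - y)‖ + ‖A‖ * ‖T (x - y)‖ := by
        gcongr
        exact h1.trans (by simpa using h2)
      _ = K * ‖T (x - y)‖ := by simp [hK]; ring
  have himg : f '' s = (f ∘ Function.invFun T) '' (T '' s) := by
    rw [← image_comp]
    refine image_congr fun x _ => ?_
    simp [Function.comp, Function.leftInverse_invFun hinj _]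
  calc μH[d] (f '' s) ≤ (K : ℝ≥0∞) ^ (d : ℝ) * μH[d] (T '' s) := by
        rw [himg]; exact hlip.hausdorffMeasure_image_le (by positivity)
    _ = (K : ℝ≥0∞) ^ d * (t * μH[d] s) := by
        rw [ENNReal.rpow_natCast, Measure.addHaar_image_linearMap, hdet]
        simp
    _ = ((K ^ d * t : ℝ≥0) : ℝ≥0∞) * μH[d] s := by push_cast; ring
    _ ≤ ε * μH[d] s := by gcongr

/-- Sard's lemma with a target of arbitrary dimension: the image of the set where the differential
is not injective is null for the Hausdorff measure in the dimension of the source. -/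
theorem hausdorffMeasure_image_eq_zero_of_not_injective [SecondCountableTopology X]
    {f : E → X} {s : Set E} {f' : E → E →L[ℝ] X}
    (hf' : ∀ x ∈ s, HasFDerivWithinAt f (f' x) s x)
    (hker : ∀ x ∈ s, ∃ v, v ≠ 0 ∧ f' x v = 0) :
    μH[finrank ℝ E] (f '' s) = 0 := by
  classical
  set μ : Measure E := μH[finrank ℝ E] with hμ
  suffices H : ∀ R : ℕ, μH[finrank ℝ E] (f '' (s ∩ closedBall 0 R)) = 0 by
    rw [← iUnion_inter_closedBall_nat s 0, image_iUnion]
    exact measure_iUnion_null H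
  intro R
  set B : Set E := closedBall 0 (R : ℝ) with hB
  have hBtop : μ B ≠ ∞ := measure_closedBall_lt_top.ne
  rcases eq_empty_or_nonempty (s ∩ B) with h0 | hne
  · simp [h0]
  have key : ∀ ε : ℝ≥0, 0 < ε → μH[finrank ℝ E] (f '' (s ∩ B)) ≤ ε * μ B := by
    intro ε hε
    -- The cover below needs a radius for every `A`; the value at injective `A` is irrelevant.
    have hex (A : E →L[ℝ] X) : ∃ δ : ℝ≥0, δ ≠ 0 ∧ ((∃ v, v ≠ 0 ∧ A v = 0) →
        ∀ (f : E → X) (s : Set E), ApproximatesLinearOn f A s δ →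
          μH[finrank ℝ E] (f '' s) ≤ ε * μH[finrank ℝ E] s) := by
      by_cases hA : ∃ v, v ≠ 0 ∧ A v = 0
      · obtain ⟨δ, h1, h2⟩ := hausdorffMeasure_image_le_of_approximates_degenerate A hA ε hε
        exact ⟨δ, h1, fun _ => h2⟩
      · exact ⟨1, one_ne_zero, fun h => absurd h hA⟩
    choose δ hδ0 hδ using hex
    obtain ⟨t, A, t_disj, t_meas, t_cover, ht, Af'⟩ :=
      exists_partition_approximatesLinearOn_of_hasFDerivWithinAt f (s ∩ B) f'
        (fun x hx => (hf' x hx.1).mono inter_subset_left) δ hδ0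
    calc μH[finrank ℝ E] (f '' (s ∩ B)) ≤ μH[finrank ℝ E] (⋃ n, f '' (s ∩ B ∩ t n)) := by
          rw [← image_iUnion, ← inter_iUnion]
          exact measure_mono (image_mono (subset_inter Subset.rfl t_cover))
      _ ≤ ∑' n, μH[finrank ℝ E] (f '' (s ∩ B ∩ t n)) := measure_iUnion_le _
      _ ≤ ∑' n, ε * μ (B ∩ t n) := by
          refine ENNReal.tsum_le_tsum fun n => ?_
          obtain ⟨y, hy, hAy⟩ := Af' hne n
          refine (hδ (A n) (hAy ▸ hker y hy.1) f _ (ht n)).trans ?_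
          gcongr
          exact inter_subset_right
      _ = ε * μ (⋃ n, B ∩ t n) := by
          rw [ENNReal.tsum_mul_left, measure_iUnion]
          · exact pairwise_disjoint_mono t_disj fun n => inter_subset_right
          · exact fun n => measurableSet_closedBall.inter (t_meas n)
      _ ≤ ε * μ B := by
          gcongr
          exact iUnion_subset fun n => inter_subset_left
  have hlim : Tendsto (fun ε : ℝ≥0 => (ε : ℝ≥0∞) * μ B) (𝓝[>] 0) (𝓝 0) := by
    have : Tendsto (fun ε : ℝ≥0 => (ε : ℝ≥0∞) * μ B) (𝓝 0) (𝓝 (((0 : ℝ≥0) : ℝ≥0∞) * μ B)) :=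
      ENNReal.Tendsto.mul_const (ENNReal.tendsto_coe.2 tendsto_id) (Or.inr hBtop)
    simp only [zero_mul, ENNReal.coe_zero] at this
    exact this.mono_left nhdsWithin_le_nhds
  rw [← nonpos_iff_eq_zero]
  refine ge_of_tendsto hlim ?_
  filter_upwards [self_mem_nhdsWithin]
  exact key

end Sard

/-! ### Hypersurfaces, subspaces and frontiers -/

section Frontier
variable {E : Type*} [NormedAddCommGroup E] [NormedSpace ℝ E] [FiniteDimensional ℝ E]

theorem finrank_ker_of_apply_eq_one {φ : E →L[ℝ] ℝ} {v : E} (hφ : φ v = 1) :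
    finrank ℝ (LinearMap.ker (φ : E →ₗ[ℝ] ℝ)) + 1 = finrank ℝ E := by
  have h := LinearMap.finrank_range_add_finrank_ker (φ : E →ₗ[ℝ] ℝ)
  have hs : Function.Surjective (φ : E →ₗ[ℝ] ℝ) := fun c => ⟨c • v, by simp [hφ]⟩
  rw [LinearMap.range_eq_top.2 hs, finrank_top, Module.finrank_self] at h
  omega

/-- A `C¹` map does not raise Hausdorff dimension, so it sends subsets of a subspace of dimension
less than `d` to `μH[d]`-null sets. -/
theorem hausdorffMeasure_image_eq_zero_of_subset_submodule {X : Type*} [NormedAddCommGroup X]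
    [NormedSpace ℝ X] [MeasurableSpace X] [BorelSpace X] {G : E → X} {S : Set E}
    (hG : ∀ x ∈ S, ContDiffAt ℝ 1 G x) (V : Submodule ℝ E) (hV : S ⊆ V) {d : ℕ}
    (hd : finrank ℝ V < d) : μH[d] (G '' S) = 0 := by
  have h1 : dimH (G '' S) ≤ dimH S := dimH_image_le_of_locally_lipschitzOn fun x hx => by
    obtain ⟨K, t, ht, h⟩ := (hG x hx).exists_lipschitzOnWith
    exact ⟨K, t, mem_nhdsWithin_of_mem_nhds ht, h⟩
  have h2 : dimH S ≤ finrank ℝ V := by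
    refine (dimH_mono hV).trans ?_
    have h3 := (isometry_subtype_coe (s := (V : Set E))).dimH_image univ
    rw [image_univ, Subtype.range_coe] at h3
    rw [h3]
    exact (Real.dimH_univ_eq_finrank V).le
  have h3 : dimH (G '' S) < ((d : ℝ≥0) : ℝ≥0∞) :=
    (h1.trans h2).trans_lt (by exact_mod_cast hd)
  exact_mod_cast hausdorffMeasure_of_dimH_lt h3

variable [MeasurableSpace E] [BorelSpace E]

/-- The frontier of a nonempty bounded open set has positive Hausdorff measure in codimension one:
every line through the set meets the frontier, so the projection of the frontier to a hyperplane
contains the projection of the set, which is open. -/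
theorem hausdorffMeasure_frontier_ne_zero [Nontrivial E] {Ω : Set E} (hΩ : IsOpen Ω)
    (hne : Ω.Nonempty) (hb : Bornology.IsBounded Ω) {d : ℕ} (hd : d + 1 = finrank ℝ E) :
    μH[d] (frontier Ω) ≠ 0 := by
  obtain ⟨v, hv⟩ := exists_ne (0 : E)
  obtain ⟨φ, hφ⟩ : ∃ φ : E →L[ℝ] ℝ, φ v = 1 := SeparatingDual.exists_eq_one (R := ℝ) hv
  set W := LinearMap.ker (φ : E →ₗ[ℝ] ℝ) with hW
  have hWd : finrank ℝ W = d := by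
    have : finrank ℝ W + 1 = finrank ℝ E := finrank_ker_of_apply_eq_one hφ
    omega
  let P : E →L[ℝ] W := (ContinuousLinearMap.id ℝ E - φ.smulRight v).codRestrict W
    (fun x => by simp [hW, hφ])
  have hPx (x : E) : (P x : E) = x - φ x • v := rfl
  have hPsurj : Function.Surjective P := by
    rintro ⟨y, hy⟩
    have hy' : φ y = 0 := by simpa [hW] using hy
    exact ⟨y, Subtype.ext (by rw [hPx]; simp [hy'])⟩
  have hsub : P '' Ω ⊆ P '' frontier Ω := by
    rintro _ ⟨x, hx, rfl⟩
    set L : ℝ → E := fun t => x + t • v with hL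
    have hLc : Continuous L := by fun_prop
    have hnt : (frontier (L ⁻¹' Ω)).Nonempty := by
      rw [nonempty_frontier_iff]
      refine ⟨⟨0, by simpa [hL] using hx⟩, fun hu => ?_⟩
      obtain ⟨R, hR⟩ := hb.subset_closedBall 0
      have hvn : 0 < ‖v‖ := norm_pos_iff.2 hv
      have h1 : L ((|R| + 1 + ‖x‖) / ‖v‖) ∈ Ω := by
        change _ ∈ L ⁻¹' Ω
        rw [hu]; trivial
      have h2 := mem_closedBall_zero_iff.1 (hR h1)
      have h3 : ‖((|R| + 1 + ‖x‖) / ‖v‖) • v‖ = |R| + 1 + ‖x‖ := by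
        rw [norm_smul, Real.norm_eq_abs, abs_of_nonneg (by positivity)]
        field_simp
      have h4 := norm_sub_le (x + ((|R| + 1 + ‖x‖) / ‖v‖) • v) x
      rw [add_sub_cancel_left, h3] at h4
      have := le_abs_self R
      simp only [hL] at h2
      linarith
    obtain ⟨t, ht⟩ := hnt
    refine ⟨L t, hLc.frontier_preimage_subset Ω ht, Subtype.ext ?_⟩
    rw [hPx, hPx]
    simp only [hL, map_add, map_smul, hφ, smul_eq_mul, mul_one, add_smul]
    abel
  intro h0
  have h1 : μH[d] (P '' frontier Ω) = 0 := by
    have := P.lipschitz.hausdorffMeasure_image_le (d := d) (by positivity) (frontier Ω)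
    rw [h0, mul_zero] at this
    exact nonpos_iff_eq_zero.1 this
  have hopen : IsOpen (P '' Ω) := P.isOpenMap hPsurj _ hΩ
  have h2 : μH[finrank ℝ W] (P '' Ω) = 0 := by
    rw [hWd]; exact measure_mono_null hsub h1
  exact (hopen.measure_pos _ (hne.image P)).ne' h2

/-- Sard's lemma on a level hypersurface `{ρ = c}`, proved in local charts. Near `x₀`, with
`ℓ = dρ(x₀)` and `ℓ v = 1`, the map `Φ x = x + (ρ x - ℓ x) • v` is a local diffeomorphism with
`ℓ ∘ Φ = ρ`, so it sends the hypersurface into the affine hyperplane `c • v + ker ℓ`. -/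
theorem hausdorffMeasure_image_hypersurface_eq_zero {X : Type*} [NormedAddCommGroup X]
    [NormedSpace ℝ X] [MeasurableSpace X] [BorelSpace X] [SecondCountableTopology X]
    {ρ : E → ℝ} (hρ : ContDiff ℝ 1 ρ) {c : ℝ} {G : E → X} {S : Set E}
    (hSc : ∀ x ∈ S, ρ x = c) (hSρ : ∀ x ∈ S, fderiv ℝ ρ x ≠ 0)
    (hSG : ∀ x ∈ S, DifferentiableAt ℝ G x)
    (hker : ∀ x ∈ S, ∃ w, w ≠ 0 ∧ fderiv ℝ ρ x w = 0 ∧ fderiv ℝ G x w = 0)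
    {d : ℕ} (hd : d + 1 = finrank ℝ E) :
    μH[d] (G '' S) = 0 := by
  have hloc : ∀ x ∈ S, ∃ N ∈ 𝓝 x, μH[d] (G '' (S ∩ N)) = 0 := by
    intro x₀ hx₀
    set ℓ : E →L[ℝ] ℝ := fderiv ℝ ρ x₀ with hℓ
    obtain ⟨v, hv⟩ : ∃ v, ℓ v = 1 := by
      obtain ⟨u, hu⟩ : ∃ u, ℓ u ≠ 0 := by
        by_contra! h
        exact hSρ x₀ hx₀ (ContinuousLinearMap.ext h)
      exact ⟨(ℓ u)⁻¹ • u, by simp [hu]⟩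
    set Φ : E → E := fun x => x + (ρ x - ℓ x) • v with hΦ
    have hΦc : ContDiff ℝ 1 Φ := by
      have := ℓ.contDiff (n := 1)
      exact contDiff_id.add ((hρ.sub this).smul contDiff_const)
    have hΦd (x : E) : HasFDerivAt Φ
        (ContinuousLinearMap.id ℝ E + (fderiv ℝ ρ x - ℓ).smulRight v) x :=
      (hasFDerivAt_id x).add
        ((((hρ.differentiable one_ne_zero) x).hasFDerivAt.sub ℓ.hasFDerivAt).smul_const v)
    have hΦ₀ : HasFDerivAt Φ ((ContinuousLinearEquiv.refl ℝ E : E ≃L[ℝ] E) : E →L[ℝ] E) x₀ := by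
      convert hΦd x₀ using 1
      ext y
      simp [hℓ]
    have hst := hΦc.contDiffAt.hasStrictFDerivAt' hΦ₀ one_ne_zero
    set g := hΦc.contDiffAt.localInverse hΦ₀ one_ne_zero with hg
    have hgc : ContDiffAt ℝ 1 g (Φ x₀) := hΦc.contDiffAt.to_localInverse hΦ₀ one_ne_zero
    have hleft : ∀ᶠ x in 𝓝 x₀, g (Φ x) = x := hst.eventually_left_inverse
    have hgd : ∀ᶠ x in 𝓝 x₀, DifferentiableAt ℝ g (Φ x) :=
      hΦc.continuous.continuousAt.eventually
        ((hgc.eventually (by simp)).mono fun y hy => hy.differentiableAt one_ne_zero)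
    refine ⟨_, inter_mem hleft.eventually_nhds hgd, ?_⟩
    set N := {x | ∀ᶠ y in 𝓝 x, g (Φ y) = y} ∩ {x | DifferentiableAt ℝ g (Φ x)} with hN
    set W := LinearMap.ker (ℓ : E →ₗ[ℝ] ℝ) with hW
    have hWd : finrank ℝ W = d := by
      have : finrank ℝ W + 1 = finrank ℝ E := finrank_ker_of_apply_eq_one hv
      omega
    have hℓΦ (x : E) : ℓ (Φ x) = ρ x := by simp [hΦ, hv]
    set f : W → X := fun y => G (g (c • v + (y : E))) with hf
    set s : Set W := {y | ∃ x ∈ S ∩ N, Φ x = c • v + (y : E)} with hs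
    have hsub : G '' (S ∩ N) ⊆ f '' s := by
      rintro _ ⟨x, hx, rfl⟩
      have hmem : Φ x - c • v ∈ W := by
        simp [hW, hℓΦ, hv, hSc x hx.1]
      refine ⟨⟨Φ x - c • v, hmem⟩, ⟨x, hx, by simp⟩, ?_⟩
      simp only [hf, add_sub_cancel]
      rw [hx.2.1.self_of_nhds]
    refine measure_mono_null hsub ?_
    rw [← hWd]
    refine hausdorffMeasure_image_eq_zero_of_not_injective
      (f' := fun y => (fderiv ℝ G (g (c • v + (y : E)))).comp
        ((fderiv ℝ g (c • v + (y : E))).comp W.subtypeL)) ?_ ?_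
    · rintro y ⟨x, hx, hxy⟩
      have hgx : g (c • v + (y : E)) = x := by rw [← hxy]; exact hx.2.1.self_of_nhds
      have h1 : HasFDerivAt (fun y : W => c • v + (y : E)) W.subtypeL y :=
        W.subtypeL.hasFDerivAt.const_add _
      have h2 : HasFDerivAt g (fderiv ℝ g (c • v + (y : E))) (c • v + (y : E)) := by
        rw [← hxy]; exact DifferentiableAt.hasFDerivAt hx.2.2
      have h3 : HasFDerivAt G (fderiv ℝ G (g (c • v + (y : E)))) (g (c • v + (y : E))) := by
        rw [hgx]; exact (hSG x hx.1).hasFDerivAt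
      exact (h3.comp y (h2.comp y h1)).hasFDerivWithinAt
    · rintro y ⟨x, hx, hxy⟩
      have hgx : g (c • v + (y : E)) = x := by rw [← hxy]; exact hx.2.1.self_of_nhds
      obtain ⟨w, hw0, hwρ, hwG⟩ := hker x hx.1
      -- The chart sends the tangent vector `w` of the hypersurface to `w - ℓ w • v`.
      have hgΦ : fderiv ℝ g (Φ x) (w - ℓ w • v) = w := by
        have h1 : HasFDerivAt (g ∘ Φ) _ x := (DifferentiableAt.hasFDerivAt hx.2.2).comp x (hΦd x)
        have h2 : HasFDerivAt (g ∘ Φ) (ContinuousLinearMap.id ℝ E) x :=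
          (hasFDerivAt_id x).congr_of_eventuallyEq hx.2.1
        have h3 := congrArg (fun L : E →L[ℝ] E => L w) (h1.unique h2)
        simpa [hwρ, sub_eq_add_neg] using h3
      have hmem : w - ℓ w • v ∈ W := by simp [hW, hv]
      refine ⟨⟨w - ℓ w • v, hmem⟩, fun h0 => hw0 ?_, ?_⟩
      · have : w - ℓ w • v = 0 := congrArg Subtype.val h0
        rw [← hgΦ, this, map_zero]
      · simp only [ContinuousLinearMap.comp_apply, Submodule.subtypeL_apply, hgx]
        rw [← hxy, hgΦ, hwG]
  choose! N hN hN0 using hloc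
  obtain ⟨T, hTS, hTc, hcov⟩ := TopologicalSpace.countable_cover_nhdsWithin
    (f := N) (s := S) fun x hx => mem_nhdsWithin_of_mem_nhds (hN x hx)
  have hsub : G '' S ⊆ ⋃ x ∈ T, G '' (S ∩ N x) := by
    rintro _ ⟨x, hx, rfl⟩
    obtain ⟨z, hz, hxz⟩ := mem_iUnion₂.1 (hcov hx)
    exact mem_iUnion₂.2 ⟨z, hz, x, ⟨hx, hxz⟩, rfl⟩
  exact measure_mono_null hsub ((measure_biUnion_null_iff hTc).2 fun x hx => hN0 x (hTS hx))

end Frontier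


/-! ### The pseudoellipsoid -/

section Ellipsoid
variable (n k : ℕ) (hk : k ≤ n) (p : Fin k → ℕ)

/-- The defining function `Σ |z_j|² + Σ |z_{n-k+i}|^{2 p_i}` of the pseudoellipsoid. -/
noncomputable def ellipsoidRho (z : Cn n) : ℝ :=
  (∑ j : Fin (n - k), ‖z (Fin.castLE (Nat.sub_le n k) j)‖ ^ 2)
    + ∑ i : Fin k, ‖z ⟨n - k + (i : ℕ), by have := i.isLt; omega⟩‖ ^ (2 * p i)

theorem contDiff_ellipsoidRho : ContDiff ℝ 1 (ellipsoidRho n k hk p) := by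
  have h (i : Fin n) : ContDiff ℝ 1 (fun z : Cn n => ‖z i‖ ^ 2) := by
    refine ContDiff.norm_sq ℝ ?_
    exact ((EuclideanSpace.proj i : Cn n →L[ℂ] ℂ).restrictScalars ℝ).contDiff
  refine (ContDiff.sum fun j _ => h _).add (ContDiff.sum fun i _ => ?_)
  simp only [pow_mul]
  exact (h _).pow _

theorem pseudoEllipsoid_eq :
    pseudoEllipsoid n k hk p = {z | ellipsoidRho n k hk p z < 1} := rfl

theorem isOpen_pseudoEllipsoid : IsOpen (pseudoEllipsoid n k hk p) :=
  isOpen_lt (contDiff_ellipsoidRho n k hk p).continuous continuous_const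

theorem ellipsoidRho_eq_one_of_mem_frontier {x : Cn n}
    (hx : x ∈ frontier (pseudoEllipsoid n k hk p)) : ellipsoidRho n k hk p x = 1 :=
  frontier_lt_subset_eq (contDiff_ellipsoidRho n k hk p).continuous continuous_const hx

/-- The radial derivative of the defining function at a boundary point is positive, as every term
is nonnegative and homogeneous of positive degree along rays. -/
theorem fderiv_ellipsoidRho_ne_zero (hp : ∀ i, 2 ≤ p i) {x : Cn n}
    (hx : ellipsoidRho n k hk p x = 1) : fderiv ℝ (ellipsoidRho n k hk p) x ≠ 0 := by
  intro h0
  set a : Fin (n - k) → ℝ := fun j => ‖x (Fin.castLE (Nat.sub_le n k) j)‖ ^ 2 with ha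
  set b : Fin k → ℝ := fun i =>
    ‖x ⟨n - k + (i : ℕ), by have := i.isLt; omega⟩‖ ^ (2 * p i) with hb
  have hray (t : ℝ) : ellipsoidRho n k hk p (t • x) =
      ∑ j, t ^ 2 * a j + ∑ i, t ^ (2 * p i) * b i := by
    simp only [ellipsoidRho, PiLp.smul_apply, norm_smul, mul_pow, ha, hb, Real.norm_eq_abs,
      pow_mul, sq_abs]
  have h1 : HasDerivAt (fun t : ℝ => ∑ j, t ^ 2 * a j + ∑ i, t ^ (2 * p i) * b i)
      (∑ j, (2 : ℝ) * a j + ∑ i, ((2 * p i : ℕ) : ℝ) * b i) 1 := by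
    refine HasDerivAt.add (HasDerivAt.fun_sum fun j _ => ?_) (HasDerivAt.fun_sum fun i _ => ?_)
    · simpa using (hasDerivAt_pow 2 (1 : ℝ)).mul_const (a j)
    · simpa using (hasDerivAt_pow (2 * p i) (1 : ℝ)).mul_const (b i)
  have h2 : HasDerivAt (fun t : ℝ => ellipsoidRho n k hk p (t • x)) 0 1 := by
    have hρ : HasFDerivAt (ellipsoidRho n k hk p) (0 : Cn n →L[ℝ] ℝ) ((1 : ℝ) • x) := by
      rw [one_smul, ← h0]
      exact ((contDiff_ellipsoidRho n k hk p).differentiable one_ne_zero x).hasFDerivAt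
    have h := hρ.comp_hasDerivAt (1 : ℝ) ((hasDerivAt_id (1 : ℝ)).smul_const x)
    rw [ContinuousLinearMap.zero_apply] at h
    exact h
  have h3 := h1.unique ((funext hray : _ = _) ▸ h2)
  have h4 : ∑ j, a j + ∑ i, b i = 1 := hx
  have h5 : ∑ j, a j ≤ ∑ j, (2 : ℝ) * a j := Finset.sum_le_sum fun j _ => by
    have : 0 ≤ a j := by positivity
    linarith
  have h6 : ∑ i, b i ≤ ∑ i, ((2 * p i : ℕ) : ℝ) * b i := Finset.sum_le_sum fun i _ => by
    have h7 : 0 ≤ b i := by positivity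
    have h8 : (1 : ℝ) ≤ ((2 * p i : ℕ) : ℝ) := by
      have := hp i
      exact_mod_cast (by omega : 1 ≤ 2 * p i)
    nlinarith
  linarith

theorem isBounded_pseudoEllipsoid (hp : ∀ i, 2 ≤ p i) :
    Bornology.IsBounded (pseudoEllipsoid n k hk p) := by
  refine (Metric.isBounded_closedBall (x := (0 : Cn n)) (r := Real.sqrt n)).subset fun z hz => ?_
  have hA : 0 ≤ ∑ j : Fin (n - k), ‖z (Fin.castLE (Nat.sub_le n k) j)‖ ^ 2 := by positivity
  have hB : 0 ≤ ∑ i : Fin k,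
    ‖z ⟨n - k + (i : ℕ), by have := i.isLt; omega⟩‖ ^ (2 * p i) := by positivity
  have hz' : _ + _ < (1 : ℝ) := hz
  have hcoord (i : Fin n) : ‖z i‖ ^ 2 ≤ 1 := by
    by_cases hi : (i : ℕ) < n - k
    · have h1 := Finset.single_le_sum
        (f := fun j : Fin (n - k) => ‖z (Fin.castLE (Nat.sub_le n k) j)‖ ^ 2)
        (fun _ _ => by positivity) (Finset.mem_univ ⟨i, hi⟩)
      have h2 : ‖z i‖ ^ 2 ≤ ∑ j : Fin (n - k), ‖z (Fin.castLE (Nat.sub_le n k) j)‖ ^ 2 := h1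
      linarith
    · set i' : Fin k := ⟨(i : ℕ) - (n - k), by have := i.isLt; omega⟩ with hi'
      have hii : (⟨n - k + (i' : ℕ), by have := i'.isLt; omega⟩ : Fin n) = i := by
        ext; simp only [hi']; omega
      have h1 := Finset.single_le_sum
        (f := fun j : Fin k => ‖z ⟨n - k + (j : ℕ), by have := j.isLt; omega⟩‖ ^ (2 * p j))
        (fun _ _ => by positivity) (Finset.mem_univ i')
      simp only [hii] at h1
      have h2 : ‖z i‖ ^ (2 * p i') ≤ 1 := by linarith
      have hpi := hp i'
      have h3 : ‖z i‖ ≤ 1 := (pow_le_one_iff_of_nonneg (norm_nonneg _) (by omega)).1 h2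
      exact pow_le_one₀ (norm_nonneg _) h3
  rw [mem_closedBall_zero_iff, EuclideanSpace.norm_eq]
  refine Real.sqrt_le_sqrt ?_
  calc ∑ i, ‖z i‖ ^ 2 ≤ ∑ _i : Fin n, (1 : ℝ) := Finset.sum_le_sum fun i _ => hcoord i
    _ = n := by simp

end Ellipsoid

/-! ### Real dimensions and complex linearity -/

theorem finrank_real_Cn (n : ℕ) : finrank ℝ (Cn n) = 2 * n := by
  rw [← Module.finrank_mul_finrank ℝ ℂ (Cn n), Complex.finrank_real_complex,
    finrank_euclideanSpace_fin]

/-- The complex hyperplane `{z_i = 0}`, regarded as a real subspace. -/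
noncomputable def coordHyperplane (n : ℕ) (i : Fin n) : Submodule ℝ (Cn n) :=
  (LinearMap.ker (EuclideanSpace.proj i : Cn n →L[ℂ] ℂ).toLinearMap).restrictScalars ℝ

theorem finrank_coordHyperplane (n : ℕ) (i : Fin n) :
    finrank ℝ (coordHyperplane n i) + 2 = 2 * n := by
  set q : Cn n →ₗ[ℝ] ℂ := (EuclideanSpace.proj i : Cn n →L[ℂ] ℂ).toLinearMap.restrictScalars ℝ
    with hq
  have hs : Function.Surjective q := fun c => ⟨EuclideanSpace.single i c, by simp [hq]⟩
  have h := LinearMap.finrank_range_add_finrank_ker q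
  rw [LinearMap.range_eq_top.2 hs, finrank_top, Complex.finrank_real_complex,
    finrank_real_Cn] at h
  have h' : finrank ℝ (coordHyperplane n i) = finrank ℝ (LinearMap.ker q) := rfl
  omega

/-- By continuity, the real differential of a `C¹` extension of a holomorphic map commutes with
multiplication by `i` up to the boundary. -/
theorem fderiv_I_smul_of_mem_closure {n : ℕ} {D U : Set (Cn n)} {F G : Cn n → Cn n}
    (hD : IsOpen D) (hF : DifferentiableOn ℂ F D) (hU : IsOpen U) (hDU : closure D ⊆ U)
    (hG : ContDiffOn ℝ 1 G U) (hGF : EqOn G F D) {x : Cn n} (hx : x ∈ closure D) (v : Cn n) :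
    fderiv ℝ G x (Complex.I • v) = Complex.I • fderiv ℝ G x v := by
  have hcont : ContinuousOn (fderiv ℝ G) (closure D) :=
    (hG.continuousOn_fderiv_of_isOpen hU le_rfl).mono hDU
  have hD' : EqOn (fun y => fderiv ℝ G y (Complex.I • v))
      (fun y => Complex.I • fderiv ℝ G y v) D := by
    intro y hy
    have h1 : HasFDerivAt G ((fderiv ℂ F y).restrictScalars ℝ) y :=
      (((hF y hy).differentiableAt (hD.mem_nhds hy)).hasFDerivAt.restrictScalars
        ℝ).congr_of_eventuallyEq (hGF.eventuallyEq_of_mem (hD.mem_nhds hy))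
    simp [h1.fderiv]
  have hc (u : Cn n) : ContinuousOn (fun y => fderiv ℝ G y u) (closure D) :=
    hcont.clm_apply continuousOn_const
  exact hD'.of_subset_closure (hc _) ((continuous_const_smul Complex.I).comp_continuousOn (hc v))
    subset_closure subset_rfl hx

/-- The kernel of a degenerate complex linear endomorphism has real dimension at least `2`, so it
meets every real hyperplane. -/
theorem exists_ne_zero_mem_ker_of_det_eq_zero {n : ℕ} {A : Cn n →L[ℝ] Cn n}
    (hA : ∀ v, A (Complex.I • v) = Complex.I • A v)
    (hdet : LinearMap.det (A : Cn n →ₗ[ℝ] Cn n) = 0) (φ : Cn n →L[ℝ] ℝ) :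
    ∃ w, w ≠ 0 ∧ φ w = 0 ∧ A w = 0 := by
  have hker := (LinearMap.bot_lt_ker_of_det_eq_zero hdet).ne'
  obtain ⟨v, hv, hv0⟩ := (Submodule.ne_bot_iff _).1 hker
  have hAv : A v = 0 := by simpa using hv
  by_cases h : φ v = 0
  · exact ⟨v, hv0, h, hAv⟩
  refine ⟨φ (Complex.I • v) • v - φ v • Complex.I • v, fun h0 => ?_, ?_, ?_⟩
  -- Over `ℂ` the vector is `(φ (I v) - φ v * I) • v`, and the coefficient has imaginary part
  -- `-φ v ≠ 0`.
  · have h1 : ((φ (Complex.I • v) : ℂ) - (φ v : ℂ) * Complex.I) • v = 0 := by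
      rw [sub_smul, mul_smul]
      simpa only [Complex.coe_smul] using h0
    have h2 := (smul_eq_zero.1 h1).resolve_right hv0
    exact h (by simpa using congrArg Complex.im h2)
  · simp [mul_comm]
  · simp [hA, hAv]

theorem boundary_bad_set_null_and_good_boundary_points_exist
    (n k m : ℕ) (hn : 0 < n) (hk0 : 0 < k) (hk : k ≤ n) (hm : 1 < m)
    (p : Fin k → ℕ) (hp : ∀ i, 2 ≤ p i)
    (F : Cn n → Cn n) (Ω : Set (Cn n)) (hΩ : IsOpen Ω) (hΩc : IsConnected Ω)
    (hFholo : DifferentiableOn ℂ F (pseudoEllipsoid n k hk p))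
    (hFmaps : MapsTo F (pseudoEllipsoid n k hk p) Ω)
    (hFsurj : SurjOn F (pseudoEllipsoid n k hk p) Ω)
    (hFproper : ProperOn n F (pseudoEllipsoid n k hk p) Ω)
    (hFmult : HasMultiplicity n F (pseudoEllipsoid n k hk p) Ω m)
    (U : Set (Cn n)) (G : Cn n → Cn n) (hU : IsOpen U)
    (hUE : closure (pseudoEllipsoid n k hk p) ⊆ U)
    (hG : ContDiffOn ℝ 1 G U) (hGF : EqOn G F (pseudoEllipsoid n k hk p)) :
    μH[(2 * n - 1 : ℝ)]
        (G '' ({x ∈ frontier (pseudoEllipsoid n k hk p) | rDet n G x = 0} ∪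
          {x ∈ frontier (pseudoEllipsoid n k hk p) |
            ∃ i : Fin n, n - k ≤ (i : ℕ) ∧ x i = 0})) = 0 ∧
      (frontier Ω \
        G '' ({x ∈ frontier (pseudoEllipsoid n k hk p) | rDet n G x = 0} ∪
          {x ∈ frontier (pseudoEllipsoid n k hk p) |
            ∃ i : Fin n, n - k ≤ (i : ℕ) ∧ x i = 0})).Nonempty := by
  set D := pseudoEllipsoid n k hk p with hD
  have hDo : IsOpen D := isOpen_pseudoEllipsoid n k hk p
  have hcast : (2 * n - 1 : ℝ) = ((2 * n - 1 : ℕ) : ℝ) := by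
    rw [Nat.cast_sub (by omega)]; push_cast; ring
  have hdim : (2 * n - 1) + 1 = finrank ℝ (Cn n) := by rw [finrank_real_Cn]; omega
  have hfr : ∀ x ∈ frontier D, x ∈ U := fun x hx => hUE (frontier_subset_closure hx)
  have hGat : ∀ x ∈ frontier D, ContDiffAt ℝ 1 G x := fun x hx =>
    hG.contDiffAt (hU.mem_nhds (hfr x hx))
  have hcrit : μH[((2 * n - 1 : ℕ) : ℝ)] (G '' {x ∈ frontier D | rDet n G x = 0}) = 0 := by
    refine hausdorffMeasure_image_hypersurface_eq_zero (contDiff_ellipsoidRho n k hk p) (c := 1)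
      (fun x hx => ellipsoidRho_eq_one_of_mem_frontier n k hk p hx.1)
      (fun x hx => fderiv_ellipsoidRho_ne_zero n k hk p hp
        (ellipsoidRho_eq_one_of_mem_frontier n k hk p hx.1))
      (fun x hx => (hGat x hx.1).differentiableAt one_ne_zero) (fun x hx => ?_) hdim
    exact exists_ne_zero_mem_ker_of_det_eq_zero
      (fderiv_I_smul_of_mem_closure hDo hFholo hU hUE hG hGF (frontier_subset_closure hx.1)) hx.2 _
  have hcoord : μH[((2 * n - 1 : ℕ) : ℝ)]
      (G '' {x ∈ frontier D | ∃ i : Fin n, n - k ≤ (i : ℕ) ∧ x i = 0}) = 0 := by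
    have hsub : G '' {x ∈ frontier D | ∃ i : Fin n, n - k ≤ (i : ℕ) ∧ x i = 0} ⊆
        ⋃ i : Fin n, G '' {x ∈ frontier D | x i = 0} := by
      rintro _ ⟨x, ⟨hx, i, -, hi⟩, rfl⟩
      exact mem_iUnion.2 ⟨i, x, ⟨hx, hi⟩, rfl⟩
    refine measure_mono_null hsub (measure_iUnion_null fun i => ?_)
    refine hausdorffMeasure_image_eq_zero_of_subset_submodule (fun x hx => hGat x hx.1)
      (coordHyperplane n i) (fun x hx => ?_) ?_
    · change (EuclideanSpace.proj i : Cn n →L[ℂ] ℂ) x = 0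
      exact hx.2
    · have := finrank_coordHyperplane n i
      omega
  rw [hcast]
  have hnull := measure_union_null hcrit hcoord
  rw [← image_union] at hnull
  refine ⟨hnull, ?_⟩
  have hΩb : Bornology.IsBounded Ω := by
    have hcpt : IsCompact (closure D) := (isBounded_pseudoEllipsoid n k hk p hp).isCompact_closure
    refine (hcpt.image_of_continuousOn (hG.continuousOn.mono hUE)).isBounded.subset fun w hw => ?_
    obtain ⟨z, hz, rfl⟩ := hFsurj hw
    exact ⟨z, subset_closure hz, hGF hz⟩
  have : Nontrivial (Cn n) := Module.nontrivial_of_finrank_pos (R := ℝ) (by omega)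
  -- Otherwise the frontier of `Ω` would lie in the null set.
  by_contra hempty
  exact hausdorffMeasure_frontier_ne_zero hΩ hΩc.nonempty hΩb hdim
    (measure_mono_null (sdiff_eq_empty.1 (not_nonempty_iff_eq_empty.1 hempty)) hnull)
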